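/- Given an integer k ≥ 2 and a real d ≥ 2, there exist τ_0 = τ_0(k, d) > 0 and a positive integer L_0 = L_0(k, d) satisfying the following. Let 0 < τ < τ_0, let G be a strongly (k choose 2)-free τ-critical graph, and let 𝓐 = (A_i : 1 ≤ i ≤ t) be an equicardinal blockade in G of width |G|/t^d (each block has exactly |G|/t^d vertices) with |G|/t^{2d} ≤ W_G, of length t with L_0 ≤ t ≤ 2|G|^{1/d}, such that every vertex a of A = A_1 ∪ ... ∪ A_t has fewer than |G|/t^d neighbours in A. Then there exist a vertex b ∈ A, an integer t' ≥ t^{1/8}, and a (t', |G|/t^{2d+2})-comb ((a_j, A'_j) : 1 ≤ j ≤ t') in (E_b ∩ A, ¬E_b ∩ A) (where E_b is the set of neighbours of b and ¬E_b the set of non-neighbours of b) such that 𝓐' = (A'_j : 1 ≤ j ≤ t') is an equicardinal minor of 𝓐 of width at least |G|/t^{2d+2}. -/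

import Mathlib

/-- `(a 0, ..., a (k-1))` has the `(k choose 2)`-property over `X`: there are witnesses
`b i j ∈ X` (for `i < j`) adjacent to `a i` and `a j` and non-adjacent to every other `a m`. -/
def HasKC2Prop {V : Type} (G : SimpleGraph V) {k : ℕ} (a : Fin k → V) (X : Set V) : Prop :=
  ∃ b : Fin k → Fin k → V, ∀ i j : Fin k, i < j →
    b i j ∈ X ∧ G.Adj (b i j) (a i) ∧ G.Adj (b i j) (a j) ∧
    ∀ m : Fin k, m ≠ i → m ≠ j → ¬ G.Adj (b i j) (a m)

/-- A blockade: a sequence of pairwise disjoint nonempty sets of vertices. -/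
def IsBlockade {V : Type} {t : ℕ} (B : Fin t → Finset V) : Prop :=
  (∀ i, (B i).Nonempty) ∧ ∀ i j, i ≠ j → Disjoint (B i) (B j)

/-- The blockade `B` is rainbow `(k choose 2)`-free: there is no tuple of vertices
lying in pairwise distinct blocks with the `(k choose 2)`-property over the union
of the blocks. -/
def IsRainbowKC2Free {V : Type} (G : SimpleGraph V) {t : ℕ} (B : Fin t → Finset V)
    (k : ℕ) : Prop :=
  ¬ ∃ (a : Fin k → V) (f : Fin k → Fin t), Function.Injective f ∧
      (∀ i, a i ∈ B (f i)) ∧ HasKC2Prop G a {x | ∃ i, x ∈ B i}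

/-- `((a i, B i) : i < t')` is a `(t', k)`-comb in `(C, D)` (for disjoint `C`, `D`):
the `a i` are distinct vertices of `C`; the `B i` are pairwise disjoint subsets of `D`,
each of cardinality at least `k` and avoiding all the `a j`; each `a i` is adjacent to
every vertex of `B i` and has no neighbour in `B j` for `j ≠ i`. -/
def IsCombIn {V : Type} (G : SimpleGraph V) {t' : ℕ} (a : Fin t' → V)
    (B : Fin t' → Finset V) (k : ℝ) (C D : Set V) : Prop :=
  Disjoint C D ∧
  Function.Injective a ∧
  (∀ i, a i ∈ C) ∧
  (∀ i, (↑(B i) : Set V) ⊆ D) ∧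
  (∀ i j, i ≠ j → Disjoint (B i) (B j)) ∧
  (∀ i j, a i ∉ B j) ∧
  (∀ i, ∀ x ∈ B i, G.Adj (a i) x) ∧
  (∀ i j, i ≠ j → ∀ x ∈ B j, ¬ G.Adj (a i) x) ∧
  (∀ i, k ≤ ((B i).card : ℝ))

/-- The family of cographs: the smallest family of (finite) graphs containing every
one-vertex graph and closed under complement, disjoint union, and isomorphism. -/
inductive IsCograph : ∀ {V : Type}, SimpleGraph V → Prop
  | single : IsCograph (⊥ : SimpleGraph (Fin 1))
  | compl {V : Type} {G : SimpleGraph V} : IsCograph G → IsCograph Gᶜ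
  | disjUnion {V W : Type} {G : SimpleGraph V} {H : SimpleGraph W} :
      IsCograph G → IsCograph H → IsCograph (G ⊕g H)
  | iso {V W : Type} {G : SimpleGraph V} {H : SimpleGraph W} :
      G ≃g H → IsCograph G → IsCograph H


/-- A graph `G` is `τ`-critical if every induced cograph in `G` has size `< |G|^τ`,
while every nonempty proper induced subgraph `G'` of `G` contains an induced cograph
of size at least `|G'|^τ`. -/
def TauCritical {V : Type} [Fintype V] (τ : ℝ) (G : SimpleGraph V) : Prop :=
  (∀ S : Finset V, IsCograph (G.induce (↑S : Set V)) →
      (S.card : ℝ) < (Fintype.card V : ℝ) ^ τ) ∧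
  (∀ S : Finset V, S.Nonempty → S ≠ Finset.univ →
      ∃ T ⊆ S, IsCograph (G.induce (↑T : Set V)) ∧ (S.card : ℝ) ^ τ ≤ (T.card : ℝ))

/-- `G` is `(k choose 2)`-free: no `k`-tuple of distinct vertices has the
`(k choose 2)`-property over the whole vertex set. -/
def KC2Free {V : Type} (G : SimpleGraph V) (k : ℕ) : Prop :=
  ¬ ∃ a : Fin k → V, Function.Injective a ∧ HasKC2Prop G a Set.univ

/-- `G` is strongly `(k choose 2)`-free: both `G` and its complement are
`(k choose 2)`-free. -/
def StronglyKC2Free {V : Type} (G : SimpleGraph V) (k : ℕ) : Prop :=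
  KC2Free G k ∧ KC2Free Gᶜ k

/-- `((b i, B i) : i < s)` belongs to the family `𝓕_G`: for some vertex `a` it is an
`(s, |G|/s²)`-comb in `(E_a, ¬E_a)` and `(B i : i < s)` is an equicardinal blockade. -/
def MemFamilyF {V : Type} [Fintype V] (G : SimpleGraph V) {s : ℕ}
    (b : Fin s → V) (B : Fin s → Finset V) : Prop :=
  (∃ a : V, IsCombIn G b B ((Fintype.card V : ℝ) / (s : ℝ) ^ 2)
      (G.neighborSet a) {x | ¬ G.Adj a x}) ∧
  (∀ i j, (B i).card = (B j).card) ∧ (∀ i, (B i).Nonempty)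

open Classical in
/-- `W_G`: the minimal width of an equicardinal blockade `(B i : i < s)` extendable to
a member of `𝓕_G ∪ 𝓕_{Ḡ}`, if such a blockade exists; `|G|` otherwise. -/
noncomputable def WG {V : Type} [Fintype V] (G : SimpleGraph V) : ℕ :=
  if (∃ (w s : ℕ) (b : Fin s → V) (B : Fin s → Finset V),
      0 < s ∧ (MemFamilyF G b B ∨ MemFamilyF Gᶜ b B) ∧ ∀ i, (B i).card = w)
  then sInf {w : ℕ | ∃ (s : ℕ) (b : Fin s → V) (B : Fin s → Finset V),
      0 < s ∧ (MemFamilyF G b B ∨ MemFamilyF Gᶜ b B) ∧ ∀ i, (B i).card = w}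
  else Fintype.card V

/-!
Write `n = |G|` and `w = n / t ^ d`, and fix a small `η > 0`. Repeatedly halving the maximum degree
in `G[A]`, and discarding at each step the few vertices of above half the current maximum degree,
must stop early: otherwise half of `A` would be independent, hence a cograph that is too large for
a critical graph. At the stopping scale `T * Δ = t * w`, all degrees are at most `Δ`, and at least
`T ^ (1 - η) * Δ` vertices have degree more than `Δ / 2`.

Some vertex `b` of large degree then has more than `T ^ (1 - 2 * η) * Δ` vertices within
distance two. If not, choose vertices of large degree greedily, each having few neighbours among
the vertices within distance one of the cographs found so far. By criticality the rest of its
neighbourhood contains a cograph of size `(Δ / 4) ^ τ`, and the union of these pairwise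
anticomplete cographs is again too large.

The neighbours of `b` cover its second neighbourhood. Selecting neighbours greedily at each dyadic
scale and then passing to a random subset, we find at some scale `U` about `U ^ (1 - 2 * η)`
neighbours with at least `t * w / (64 * U)` private neighbours each. These form a comb whose width
is bounded below by `W_G`, so that `U` is at most `2 * t ^ (d + 1)`. Finally each tooth has a
large intersection with some block, and a maximal matching between teeth and blocks puts many teeth
in distinct blocks.
-/

open Finset

section PrivateNeighbours

variable {α β : Type*} {r : α → β → Prop} [DecidableRel r] {S I X : Finset α} {Y : Finset β}
  {δ Δ : ℝ}

lemma card_le_two_mul_card_filter_le_three {ι : Type*} {s : Finset ι} {f : ι → ℕ}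
    (h : ∑ x ∈ s, f x ≤ 2 * #s) : #s ≤ 2 * #{x ∈ s | f x ≤ 3} := by
  have hlarge : #{x ∈ s | ¬ f x ≤ 3} * 4 ≤ ∑ x ∈ s, f x := by
    rw [← smul_eq_mul]
    refine (card_nsmul_le_sum _ f 4 fun x hx => ?_).trans
      (sum_le_sum_of_subset (filter_subset _ _))
    have := (mem_filter.1 hx).2
    omega
  have := card_filter_add_card_filter_not (s := s) (f · ≤ 3)
  omega

lemma sum_le_mul_card_filter_add_mul_card {ι : Type*} {s : Finset ι} {f : ι → ℝ} {a M : ℝ}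
    (ha : 0 ≤ a) (hM : ∀ x ∈ s, f x ≤ M) :
    ∑ x ∈ s, f x ≤ M * #{x ∈ s | a ≤ f x} + a * #s := by
  calc ∑ x ∈ s, f x ≤ ∑ x ∈ s, ((if a ≤ f x then M else 0) + a) :=
        sum_le_sum fun x hx => by split_ifs <;> linarith [hM x hx]
    _ = _ := by
      rw [sum_add_distrib, ← sum_filter, sum_const, sum_const, nsmul_eq_mul, nsmul_eq_mul]
      ring

lemma sum_card_bipartiteBelow_le (h : ∀ x ∈ I, (#(Y.bipartiteAbove r x) : ℝ) ≤ Δ) :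
    ∑ y ∈ Y, (#(I.bipartiteBelow r y) : ℝ) ≤ Δ * #I := by
  calc ∑ y ∈ Y, (#(I.bipartiteBelow r y) : ℝ) = ∑ x ∈ I, (#(Y.bipartiteAbove r x) : ℝ) := by
        exact_mod_cast (sum_card_bipartiteAbove_eq_sum_card_bipartiteBelow r).symm
    _ ≤ ∑ _x ∈ I, Δ := sum_le_sum h
    _ = Δ * #I := by rw [sum_const, nsmul_eq_mul, mul_comm]

lemma two_pow_card_le_mul_card_filter_card_inter_eq_one [DecidableEq α]
    {e : Finset α} {k : ℕ} (he : e ⊆ I) (hne : e.Nonempty) (hk : #e ≤ k) :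
    2 ^ #I ≤ 2 ^ k * #{S ∈ I.powerset | #(S ∩ e) = 1} := by
  obtain ⟨x, hx⟩ := hne
  have hIcc : Icc {x} (insert x (I \ e)) ⊆ {S ∈ I.powerset | #(S ∩ e) = 1} := by
    intro S hS
    obtain ⟨hxS, hSI⟩ := mem_Icc.1 hS
    rw [mem_filter, mem_powerset]
    refine ⟨hSI.trans (insert_subset (he hx) sdiff_subset), card_eq_one.2 ⟨x, ?_⟩⟩
    refine Subset.antisymm (fun z hz => ?_)
      (singleton_subset_iff.2 (mem_inter.2 ⟨singleton_subset_iff.1 hxS, hx⟩))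
    have := hSI (mem_inter.1 hz).1
    simp_all
  have hcard : #(insert x (I \ e)) - #{x} = #I - #e := by
    rw [card_insert_of_notMem (by simp [hx]), card_sdiff_of_subset he, card_singleton,
      Nat.add_sub_cancel]
  calc 2 ^ #I ≤ 2 ^ (k + (#I - #e)) := Nat.pow_le_pow_right two_pos (by omega)
    _ = 2 ^ k * #(Icc {x} (insert x (I \ e))) := by
      rw [card_Icc_finset (by simp), hcard, pow_add]
    _ ≤ _ := Nat.mul_le_mul_left _ (card_le_card hIcc)

-- A uniformly random `S ⊆ I` meets a nonempty set of at most `k` elements in exactly one point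
-- with probability at least `2⁻ᵏ`.
lemma exists_subset_card_le_mul_card_filter_card_bipartiteBelow_eq_one {k : ℕ}
    (hpos : ∀ y ∈ Y, ∃ x ∈ I, r x y) (hk : ∀ y ∈ Y, #(I.bipartiteBelow r y) ≤ k) :
    ∃ S ⊆ I, #Y ≤ 2 ^ k * #{y ∈ Y | #(S.bipartiteBelow r y) = 1} := by
  classical
  have hswap : ∑ S ∈ I.powerset, #{y ∈ Y | #(S.bipartiteBelow r y) = 1} =
      ∑ y ∈ Y, #{S ∈ I.powerset | #(S.bipartiteBelow r y) = 1} := by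
    simp only [card_filter]
    exact sum_comm
  have hsum : ∑ _S ∈ I.powerset, #Y ≤
      ∑ S ∈ I.powerset, 2 ^ k * #{y ∈ Y | #(S.bipartiteBelow r y) = 1} := by
    rw [sum_const, card_powerset, smul_eq_mul, ← mul_sum, hswap, mul_sum, mul_comm,
      ← smul_eq_mul, ← sum_const]
    refine sum_le_sum fun y hy => ?_
    obtain ⟨x, hxI, hxy⟩ := hpos y hy
    have hinter : ∀ S ∈ I.powerset, S.bipartiteBelow r y = S ∩ I.bipartiteBelow r y :=
      fun S hS => by
        rw [bipartiteBelow, bipartiteBelow, inter_filter, inter_eq_left.2 (mem_powerset.1 hS)]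
    rw [filter_congr fun S hS => by rw [hinter S hS]]
    exact two_pow_card_le_mul_card_filter_card_inter_eq_one (filter_subset _ _)
      ⟨x, (mem_bipartiteBelow r).2 ⟨hxI, hxy⟩⟩ (hk y hy)
  obtain ⟨S, hS, hYS⟩ := exists_le_of_sum_le (powerset_nonempty I) hsum
  exact ⟨S, mem_powerset.1 hS, hYS⟩

lemma exists_subset_le_card_biUnion_bipartiteAbove [DecidableEq β] (X : Finset α) (Y : Finset β)
    (hδ : 0 ≤ δ) :
    ∃ I ⊆ X, δ * #I ≤ #(I.biUnion fun x => Y.bipartiteAbove r x) ∧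
      ∀ x ∈ X, (#((Y \ I.biUnion fun x => Y.bipartiteAbove r x).bipartiteAbove r x) : ℝ) ≤ δ := by
  classical
  set C : Finset α → Finset β := fun I => I.biUnion fun x => Y.bipartiteAbove r x
  obtain ⟨I, hI, hmax⟩ := {I ∈ X.powerset | δ * #I ≤ #(C I)}.exists_max_image card
    ⟨∅, by simp⟩
  rw [mem_filter, mem_powerset] at hI
  refine ⟨I, hI.1, hI.2, fun x hx => ?_⟩
  by_contra! hlarge
  have hunion : C (insert x I) = C I ∪ (Y \ C I).bipartiteAbove r x := by
    ext y
    simp only [C, mem_biUnion, mem_insert, mem_union, mem_bipartiteAbove, mem_sdiff]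
    grind
  have hdisj : Disjoint (C I) ((Y \ C I).bipartiteAbove r x) :=
    disjoint_of_subset_right (filter_subset _ _) disjoint_sdiff
  have hx : x ∉ I := by
    intro hxI
    rw [insert_eq_self.2 hxI, eq_comm, union_eq_left] at hunion
    rw [disjoint_self_iff_empty _ |>.1 (hdisj.mono_left hunion), card_empty, Nat.cast_zero]
      at hlarge
    exact hlarge.not_ge hδ
  have := hmax (insert x I) <| by
    rw [mem_filter, mem_powerset, hunion, card_union_of_disjoint hdisj, card_insert_of_notMem hx]
    refine ⟨insert_subset ‹_› hI.1, ?_⟩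
    push_cast
    linarith [hI.2]
  rw [card_insert_of_notMem hx] at this
  omega

variable [DecidableEq α]

/-- The private neighbours of `i` in `Y` relative to `S`: the elements of `Y` related to `i` and
to no other element of `S`. They are nonempty only if `i ∈ S`. These sets are the teeth of the
combs constructed below. -/
def privateNbrs (r : α → β → Prop) [DecidableRel r] (S : Finset α) (Y : Finset β) (i : α) :
    Finset β :=
  {y ∈ Y | S.bipartiteBelow r y = {i}}

variable {i j : α} {y : β}

lemma mem_privateNbrs : y ∈ privateNbrs r S Y i ↔ y ∈ Y ∧ S.bipartiteBelow r y = {i} :=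
  mem_filter

lemma privateNbrs_subset : privateNbrs r S Y i ⊆ Y :=
  filter_subset _ _

lemma rel_iff_eq_of_mem_privateNbrs (hy : y ∈ privateNbrs r S Y i) (hj : j ∈ S) :
    r j y ↔ j = i := by
  rw [← mem_singleton, ← (mem_privateNbrs.1 hy).2, mem_bipartiteBelow, and_iff_right hj]

lemma rel_of_mem_privateNbrs (hy : y ∈ privateNbrs r S Y i) : r i y := by
  have hi : i ∈ S.bipartiteBelow r y := by simp [(mem_privateNbrs.1 hy).2]
  exact ((mem_bipartiteBelow r).1 hi).2

lemma privateNbrs_subset_bipartiteAbove : privateNbrs r S Y i ⊆ Y.bipartiteAbove r i :=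
  fun _ hy => (mem_bipartiteAbove r).2 ⟨privateNbrs_subset hy, rel_of_mem_privateNbrs hy⟩

lemma disjoint_privateNbrs (hij : i ≠ j) :
    Disjoint (privateNbrs r S Y i) (privateNbrs r S Y j) :=
  disjoint_filter.2 fun _ _ hi hj => hij (singleton_injective (hi.symm.trans hj))

lemma privateNbrs_subset_privateNbrs {S' : Finset α} {Y' : Finset β} (hS : S' ⊆ S) (hi : i ∈ S')
    (hY : Y ⊆ Y') : privateNbrs r S Y i ⊆ privateNbrs r S' Y' i := by
  intro y hy
  refine mem_privateNbrs.2 ⟨hY (privateNbrs_subset hy), ?_⟩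
  ext j
  rw [mem_bipartiteBelow, mem_singleton]
  exact ⟨fun hj => (rel_iff_eq_of_mem_privateNbrs hy (hS hj.1)).1 hj.2,
    fun hj => hj ▸ ⟨hi, rel_of_mem_privateNbrs hy⟩⟩

lemma card_filter_card_bipartiteBelow_eq_one_le :
    #{y ∈ Y | #(S.bipartiteBelow r y) = 1} ≤ ∑ i ∈ S, #(privateNbrs r S Y i) := by
  classical
  refine (card_le_card fun y hy => ?_).trans card_biUnion_le
  obtain ⟨hyY, hy⟩ := mem_filter.1 hy
  obtain ⟨i, hi⟩ := card_eq_one.1 hy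
  have hiS : i ∈ S.bipartiteBelow r y := by simp [hi]
  exact mem_biUnion.2 ⟨i, ((mem_bipartiteBelow r).1 hiS).1, mem_privateNbrs.2 ⟨hyY, hi⟩⟩

lemma exists_subset_le_card_privateNbrs (hδ : 0 < δ)
    (hdeg : ∀ x ∈ I, (#(Y.bipartiteAbove r x) : ℝ) ≤ 2 * δ) (hcov : ∀ y ∈ Y, ∃ x ∈ I, r x y)
    (hcard : δ * #I ≤ #Y) :
    ∃ S ⊆ I, (∀ i ∈ S, δ / 32 ≤ #(privateNbrs r S Y i)) ∧ (#I : ℝ) ≤ 64 * #S := by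
  set Y₃ : Finset β := {y ∈ Y | #(I.bipartiteBelow r y) ≤ 3}
  have hY₃ : #Y ≤ 2 * #Y₃ := card_le_two_mul_card_filter_le_three <| by
    exact_mod_cast (sum_card_bipartiteBelow_le hdeg).trans (by linarith : _ ≤ (2 * #Y : ℝ))
  obtain ⟨S, hSI, hS⟩ := exists_subset_card_le_mul_card_filter_card_bipartiteBelow_eq_one
    (Y := Y₃) (k := 3) (fun y hy => hcov y (mem_of_mem_filter y hy)) fun y hy => (mem_filter.1 hy).2
  have hprivate : (#{y ∈ Y₃ | #(S.bipartiteBelow r y) = 1} : ℝ) ≤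
      ∑ i ∈ S, (#(privateNbrs r S Y i) : ℝ) := by
    exact_mod_cast (card_le_card (filter_subset_filter _ (filter_subset _ _))).trans
      (card_filter_card_bipartiteBelow_eq_one_le (r := r) (Y := Y))
  refine ⟨{i ∈ S | δ / 32 ≤ #(privateNbrs r S Y i)}, (filter_subset _ _).trans hSI,
    fun i hi => (mem_filter.1 hi).2.trans ?_, ?_⟩
  · exact_mod_cast card_le_card (privateNbrs_subset_privateNbrs (filter_subset _ _) hi subset_rfl)
  · have hmarkov := sum_le_mul_card_filter_add_mul_card (s := S) (a := δ / 32) (M := 2 * δ)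
      (f := fun i => (#(privateNbrs r S Y i) : ℝ)) (by positivity) fun i hi =>
        le_trans (mod_cast card_le_card privateNbrs_subset_bipartiteAbove) (hdeg i (hSI hi))
    have hSI' : δ / 32 * #S ≤ δ / 32 * #I := by gcongr
    have hsum : (#Y : ℝ) ≤ 16 * ∑ i ∈ S, (#(privateNbrs r S Y i) : ℝ) := by
      have : (#Y : ℝ) ≤ 16 * #{y ∈ Y₃ | #(S.bipartiteBelow r y) = 1} := by
        exact_mod_cast (by omega : #Y ≤ 16 * #{y ∈ Y₃ | #(S.bipartiteBelow r y) = 1})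
      linarith
    refine le_of_mul_le_mul_left ?_ hδ
    linarith

lemma exists_privateNbrs_and_sparse_remainder (hδ : 0 < δ)
    (hdeg : ∀ x ∈ X, (#(Y.bipartiteAbove r x) : ℝ) ≤ 2 * δ) :
    ∃ I ⊆ X, ∃ Y' ⊆ Y, (∀ x ∈ X, (#(Y'.bipartiteAbove r x) : ℝ) ≤ δ) ∧
      (∀ i ∈ I, δ / 32 ≤ #(privateNbrs r I Y i)) ∧ (#Y : ℝ) ≤ #Y' + 128 * δ * #I := by
  classical
  obtain ⟨I, hIX, hI, hsparse⟩ := exists_subset_le_card_biUnion_bipartiteAbove (r := r) X Y hδ.le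
  set C : Finset β := I.biUnion fun x => Y.bipartiteAbove r x
  have hCY : C ⊆ Y := biUnion_subset.2 fun x _ => filter_subset _ _
  obtain ⟨S, hSI, hpriv, hIS⟩ := exists_subset_le_card_privateNbrs (r := r) hδ
    (fun x hx => le_trans (mod_cast card_le_card (filter_subset_filter _ hCY))
      (hdeg x (hIX hx)))
    (fun y hy => (mem_biUnion.1 hy).imp fun x hx => ⟨hx.1, ((mem_bipartiteAbove r).1 hx.2).2⟩) hI
  refine ⟨S, hSI.trans hIX, Y \ C, sdiff_subset, hsparse, fun i hi => (hpriv i hi).trans ?_, ?_⟩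
  · exact_mod_cast card_le_card (privateNbrs_subset_privateNbrs subset_rfl hi hCY)
  · have hC : (#C : ℝ) ≤ #I * (2 * δ) := by
      rw [← nsmul_eq_mul, ← sum_const]
      exact le_trans (mod_cast card_biUnion_le) (sum_le_sum fun x hx => hdeg x (hIX hx))
    have hsdiff : (#(Y \ C) : ℝ) + #C = #Y := mod_cast card_sdiff_add_card_eq_card hCY
    nlinarith

end PrivateNeighbours

section DyadicDescent

lemma exists_dyadic_descent {γ : Type*} {P : ℝ → Finset γ → Prop} {ε : ℕ → ℝ}
    (hε : ∀ n, ∑ l ∈ range n, ε l ≤ 1 / 2) {Δ : ℝ} {Y : Finset γ} (hP : P Δ Y)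
    (hstep : ∀ l, ∀ Z ⊆ Y, 1 ≤ Δ / 2 ^ l → P (Δ / 2 ^ l) Z →
      ∃ Z' ⊆ Z, P (Δ / 2 ^ (l + 1)) Z' ∧ (#Z : ℝ) ≤ #Z' + ε l * #Y) :
    ∃ Z ⊆ Y, ∃ D < 1, P D Z ∧ #Y ≤ 2 * #Z := by
  have hex : ∃ l : ℕ, Δ / 2 ^ l < 1 := by
    obtain ⟨l, hl⟩ := pow_unbounded_of_one_lt Δ one_lt_two
    exact ⟨l, by rwa [div_lt_one (by positivity)]⟩
  have descend : ∀ l ≤ Nat.find hex, ∃ Z ⊆ Y, P (Δ / 2 ^ l) Z ∧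
      (#Y : ℝ) ≤ #Z + (∑ i ∈ range l, ε i) * #Y := by
    intro l hl
    induction l with
    | zero => exact ⟨Y, subset_rfl, by simpa using hP, by simp⟩
    | succ l ih =>
      obtain ⟨Z, hZY, hPZ, hZ⟩ := ih (by omega)
      obtain ⟨Z', hZ'Z, hPZ', hZ'⟩ := hstep l Z hZY (not_lt.1 (Nat.find_min hex hl)) hPZ
      refine ⟨Z', hZ'Z.trans hZY, hPZ', ?_⟩
      rw [sum_range_succ, add_mul]
      linarith
  obtain ⟨Z, hZY, hPZ, hZ⟩ := descend _ le_rfl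
  refine ⟨Z, hZY, _, Nat.find_spec hex, hPZ, ?_⟩
  have := mul_le_mul_of_nonneg_right (hε (Nat.find hex)) (Nat.cast_nonneg (α := ℝ) #Y)
  exact_mod_cast (by linarith : (#Y : ℝ) ≤ 2 * #Z)

/-- The fraction of the vertices that is discarded at the `l`-th step of a dyadic descent. The
weights decay geometrically in `l`, and are normalised to have total mass `1 / 2`. -/
noncomputable def dyadicWeight (η : ℝ) (l : ℕ) : ℝ :=
  (1 - 2 ^ (-η)) / 2 * ((2 : ℝ) ^ l) ^ (-η)

variable {η : ℝ}

lemma one_sub_two_rpow_neg_pos (hη : 0 < η) : 0 < 1 - (2 : ℝ) ^ (-η) :=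
  sub_pos.2 (Real.rpow_lt_one_of_one_lt_of_neg one_lt_two (neg_lt_zero.2 hη))

lemma dyadicWeight_pos (hη : 0 < η) (l : ℕ) : 0 < dyadicWeight η l :=
  mul_pos (half_pos (one_sub_two_rpow_neg_pos hη)) (by positivity)

lemma sum_dyadicWeight_le (n : ℕ) : ∑ l ∈ range n, dyadicWeight η l ≤ 1 / 2 := by
  set σ : ℝ := 2 ^ (-η)
  have hsum : ∑ l ∈ range n, dyadicWeight η l = (1 - σ ^ n) / 2 := by
    have hpow : ∀ l : ℕ, ((2 : ℝ) ^ l) ^ (-η) = σ ^ l := fun l => by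
      rw [← Real.rpow_natCast, ← Real.rpow_natCast, ← Real.rpow_mul two_pos.le,
        ← Real.rpow_mul two_pos.le, mul_comm]
    simp_rw [dyadicWeight, ← mul_sum, hpow]
    linarith [mul_neg_geom_sum σ n]
  have : 0 ≤ σ ^ n := by positivity
  linarith

variable {α β : Type*} {r : α → β → Prop} [DecidableRel r] {X : Finset α} {Y : Finset β} {Δ : ℝ}
  {ε : ℕ → ℝ}

lemma exists_privateNbrs_of_cover [DecidableEq α] (hΔ : 0 < Δ) (hY : Y.Nonempty)
    (hε : ∀ n, ∑ l ∈ range n, ε l ≤ 1 / 2) (hdeg : ∀ x ∈ X, (#(Y.bipartiteAbove r x) : ℝ) ≤ Δ)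
    (hcov : ∀ y ∈ Y, ∃ x ∈ X, r x y) :
    ∃ l : ℕ, 1 ≤ Δ / 2 ^ l ∧ ∃ I ⊆ X, (∀ i ∈ I, Δ / 2 ^ l / 64 ≤ #(privateNbrs r I Y i)) ∧
      ε l * #Y ≤ 64 * (Δ / 2 ^ l) * #I := by
  by_contra! hsmall
  obtain ⟨Z, hZY, D, hD, hdegZ, hYZ⟩ := exists_dyadic_descent
    (P := fun D Z => ∀ x ∈ X, (#(Z.bipartiteAbove r x) : ℝ) ≤ D) hε hdeg
    fun l Z hZY hl hdegZ => by
      obtain ⟨I, hIX, Z', hZ'Z, hdegZ', hI, hZZ'⟩ := exists_privateNbrs_and_sparse_remainder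
        (δ := Δ / 2 ^ (l + 1)) (by positivity)
        fun x hx => (hdegZ x hx).trans_eq (by rw [pow_succ]; ring)
      refine ⟨Z', hZ'Z, hdegZ', hZZ'.trans ?_⟩
      have hlt := hsmall l hl I hIX fun i hi => by
        refine le_trans ?_ ((hI i hi).trans (mod_cast card_le_card
          (privateNbrs_subset_privateNbrs subset_rfl hi hZY)))
        exact le_of_eq (by rw [pow_succ]; ring)
      have : 128 * (Δ / 2 ^ (l + 1)) * #I = 64 * (Δ / 2 ^ l) * #I := by rw [pow_succ]; ring
      linarith
  obtain ⟨y, hy⟩ := card_pos.1 (show 0 < #Z by have := hY.card_pos; omega)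
  obtain ⟨x, hxX, hxy⟩ := hcov y (hZY hy)
  have : (#(Z.bipartiteAbove r x) : ℝ) < 1 := (hdegZ x hxX).trans_lt hD
  have hpos : 0 < #(Z.bipartiteAbove r x) := card_pos.2 ⟨y, (mem_bipartiteAbove r).2 ⟨hy, hxy⟩⟩
  have : #(Z.bipartiteAbove r x) < 1 := by exact_mod_cast this
  omega

lemma exists_isIndepSet_or_balanced {V : Type*} (G : SimpleGraph V) [DecidableRel G.Adj]
    {A : Finset V} (hε : ∀ n, ∑ l ∈ range n, ε l ≤ 1 / 2)
    (hdeg : ∀ x ∈ A, (#(A.bipartiteAbove G.Adj x) : ℝ) ≤ Δ) :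
    (∃ A' ⊆ A, G.IsIndepSet (A' : Set V) ∧ #A ≤ 2 * #A') ∨
    ∃ l : ℕ, 1 ≤ Δ / 2 ^ l ∧ ∃ A' ⊆ A,
      (∀ x ∈ A', (#(A'.bipartiteAbove G.Adj x) : ℝ) ≤ Δ / 2 ^ l) ∧
      ε l * #A ≤ #{x ∈ A' | Δ / 2 ^ l / 2 < #(A'.bipartiteAbove G.Adj x)} := by
  by_contra! ⟨hindep, hsmall⟩
  obtain ⟨Z, hZA, D, hD, hdegZ, hAZ⟩ := exists_dyadic_descent
    (P := fun D Z => ∀ x ∈ Z, (#(Z.bipartiteAbove G.Adj x) : ℝ) ≤ D) hε hdeg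
    fun l Z hZA hl hdegZ => by
      have hlt := hsmall l hl Z hZA hdegZ
      refine ⟨{x ∈ Z | ¬ Δ / 2 ^ l / 2 < #(Z.bipartiteAbove G.Adj x)}, filter_subset _ _,
        fun x hx => ?_, ?_⟩
      · refine le_trans ?_ ((not_lt.1 (mem_filter.1 hx).2).trans_eq (by rw [pow_succ]; ring))
        exact_mod_cast card_le_card (filter_subset_filter _ (filter_subset _ _))
      · have := card_filter_add_card_filter_not (s := Z)
          fun x => Δ / 2 ^ l / 2 < #(Z.bipartiteAbove G.Adj x)
        rify at this
        linarith
  refine (hindep Z hZA fun x hx y hy _ hxy => ?_).not_ge hAZ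
  have hpos : 0 < #(Z.bipartiteAbove G.Adj x) := card_pos.2 ⟨y, (mem_bipartiteAbove _).2 ⟨hy, hxy⟩⟩
  have : #(Z.bipartiteAbove G.Adj x) < 1 := by exact_mod_cast (hdegZ x hx).trans_lt hD
  omega

end DyadicDescent

section SecondNeighbourhoods

lemma IsCograph.of_unique {W : Type} [Unique W] (G : SimpleGraph W) : IsCograph G := by
  refine .iso ⟨Equiv.ofUnique _ _, ?_⟩ .single
  intro x y
  rw [Subsingleton.elim x y]
  simp

variable {V : Type} {G : SimpleGraph V}

lemma IsCograph.induce_union {s t : Set V} (hs : IsCograph (G.induce s))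
    (ht : IsCograph (G.induce t)) (hst : Disjoint s t) (hG : ∀ x ∈ s, ∀ y ∈ t, ¬ G.Adj x y) :
    IsCograph (G.induce (s ∪ t)) := by
  classical
  refine .iso ⟨(Equiv.Set.union hst).symm, ?_⟩ (hs.disjUnion ht)
  rintro (⟨x, hx⟩ | ⟨x, hx⟩) (⟨y, hy⟩ | ⟨y, hy⟩)
  · rfl
  · simpa using hG x hx y hy
  · simpa [G.adj_comm] using hG y hy x hx
  · rfl

lemma isCograph_induce_of_isIndepSet {C : Finset V} (hC : C.Nonempty)
    (hindep : G.IsIndepSet (C : Set V)) : IsCograph (G.induce (C : Set V)) := by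
  induction hC using Finset.Nonempty.cons_induction with
  | singleton a =>
    rw [coe_singleton]
    exact .of_unique _
  | cons a s ha _ ih =>
    rw [coe_cons] at hindep ⊢
    rw [Set.insert_eq]
    refine (IsCograph.of_unique (G.induce {a})).induce_union
      (ih (Set.Pairwise.mono (Set.subset_insert _ _) hindep)) (by simpa using ha) ?_
    rintro _ rfl y hy
    exact hindep (Set.mem_insert _ _) (Set.mem_insert_of_mem _ hy) (ne_of_mem_of_not_mem hy ha).symm

variable [DecidableEq V] [DecidableRel G.Adj] {A S C D : Finset V} {Δ M : ℝ} {b : V}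

/-- The closed neighbourhood of `C` in `G[A ∪ C]`, that is `C` together with the neighbours in `A`
of its elements. Applied to the neighbourhood of a vertex `b` it gives the ball of radius two
around `b`. -/
def closedNbhdIn (G : SimpleGraph V) [DecidableRel G.Adj] (A C : Finset V) : Finset V :=
  C ∪ C.biUnion fun x => A.bipartiteAbove G.Adj x

lemma subset_closedNbhdIn : C ⊆ closedNbhdIn G A C :=
  subset_union_left

lemma mem_closedNbhdIn_of_adj {x y : V} (hx : x ∈ C) (hy : y ∈ A) (hxy : G.Adj x y) :
    y ∈ closedNbhdIn G A C :=
  mem_union_right _ (mem_biUnion.2 ⟨x, hx, (mem_bipartiteAbove _).2 ⟨hy, hxy⟩⟩)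

lemma closedNbhdIn_subset (hC : C ⊆ A) : closedNbhdIn G A C ⊆ A :=
  union_subset hC (biUnion_subset.2 fun _ _ => filter_subset _ _)

lemma closedNbhdIn_mono (h : C ⊆ D) : closedNbhdIn G A C ⊆ closedNbhdIn G A D :=
  union_subset_union h (biUnion_subset_biUnion_of_subset_left _ h)

lemma closedNbhdIn_union : closedNbhdIn G A (C ∪ D) = closedNbhdIn G A C ∪ closedNbhdIn G A D := by
  rw [closedNbhdIn, union_biUnion, closedNbhdIn, closedNbhdIn, union_union_union_comm]

lemma exists_card_bipartiteAbove_le {α β : Type*} {r : α → β → Prop} [DecidableRel r]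
    {S : Finset α} {Z : Finset β} {δ : ℝ} (hS : S.Nonempty)
    (hdeg : ∀ z ∈ Z, (#(S.bipartiteBelow r z) : ℝ) ≤ Δ) (hZ : #Z * Δ ≤ #S * δ) :
    ∃ x ∈ S, (#(Z.bipartiteAbove r x) : ℝ) ≤ δ := by
  refine exists_le_of_sum_le hS ?_
  calc ∑ x ∈ S, (#(Z.bipartiteAbove r x) : ℝ) = ∑ z ∈ Z, (#(S.bipartiteBelow r z) : ℝ) := by
        exact_mod_cast sum_card_bipartiteAbove_eq_sum_card_bipartiteBelow r
    _ ≤ ∑ _z ∈ Z, Δ := sum_le_sum hdeg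
    _ ≤ ∑ _x ∈ S, δ := by simpa only [sum_const, nsmul_eq_mul] using hZ

variable [Fintype V] {τ : ℝ}

lemma TauCritical.exists_extension (hG : TauCritical τ G) (hτ : 0 < τ) (hΔ : 0 < Δ)
    (hC : C.Nonempty → IsCograph (G.induce (C : Set V)))
    (hb : Δ / 2 < #(A.bipartiteAbove G.Adj b))
    (hbC : (#((closedNbhdIn G A C).bipartiteAbove G.Adj b) : ℝ) ≤ Δ / 4) :
    ∃ C' ⊆ C ∪ A.bipartiteAbove G.Adj b, IsCograph (G.induce (C' : Set V)) ∧
      #C + (Δ / 4) ^ τ ≤ #C' := by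
  set W := A.bipartiteAbove G.Adj b \ closedNbhdIn G A C
  have hWA : ∀ y ∈ W, y ∈ A ∧ G.Adj b y ∧ y ∉ closedNbhdIn G A C := fun y hy => by
    simpa only [W, mem_sdiff, mem_bipartiteAbove, and_assoc] using hy
  have hWcard : Δ / 4 ≤ #W := by
    have hcover : A.bipartiteAbove G.Adj b ⊆ W ∪ (closedNbhdIn G A C).bipartiteAbove G.Adj b := by
      intro y hy
      simp only [W, mem_union, mem_sdiff, mem_bipartiteAbove] at hy ⊢
      tauto
    have := (card_le_card hcover).trans (card_union_le _ _)
    rify at this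
    linarith
  have hWne : W.Nonempty := by
    rw [← card_pos]
    exact_mod_cast (by linarith : (0 : ℝ) < #W)
  have hWuniv : W ≠ univ := fun h => (hWA b (h ▸ mem_univ b)).2.1.ne rfl
  obtain ⟨T, hTW, hT, hTcard⟩ := hG.2 W hWne hWuniv
  have hTcard : (Δ / 4) ^ τ ≤ (#T : ℝ) :=
    (Real.rpow_le_rpow (by positivity) hWcard hτ.le).trans hTcard
  have hdisj : Disjoint C T :=
    disjoint_left.2 fun x hxC hxT => (hWA x (hTW hxT)).2.2 (subset_closedNbhdIn hxC)
  refine ⟨C ∪ T, union_subset_union_right (hTW.trans sdiff_subset), ?_, ?_⟩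
  · rcases C.eq_empty_or_nonempty with rfl | hCne
    · rwa [empty_union]
    · rw [coe_union]
      refine (hC hCne).induce_union hT (disjoint_coe.2 hdisj) fun x hx y hy hxy => ?_
      obtain ⟨hyA, -, hyC⟩ := hWA y (hTW hy)
      exact hyC (mem_closedNbhdIn_of_adj hx hyA hxy)
  · rw [card_union_of_disjoint hdisj]
    push_cast
    linarith

lemma TauCritical.exists_lt_card_closedNbhdIn (hG : TauCritical τ G) (hτ : 0 < τ) (hΔ : 0 < Δ)
    (hM : 0 < M) (hSA : S ⊆ A) (hdeg : ∀ x ∈ A, (#(A.bipartiteAbove G.Adj x) : ℝ) ≤ Δ)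
    (hS : ∀ x ∈ S, Δ / 2 < #(A.bipartiteAbove G.Adj x)) {m : ℕ} (hm : 0 < m)
    (hmS : 4 * m * M ≤ #S) (hmV : (Fintype.card V : ℝ) ^ τ ≤ m * (Δ / 4) ^ τ) :
    ∃ b ∈ S, M < #(closedNbhdIn G A (A.bipartiteAbove G.Adj b)) := by
  by_contra! hball
  have hSne : S.Nonempty := by
    rw [← card_pos]
    exact_mod_cast (by positivity : (0 : ℝ) < 4 * m * M).trans_le hmS
  have greedy : ∀ r ≤ m, ∃ C ⊆ A, (C.Nonempty → IsCograph (G.induce (C : Set V))) ∧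
      r * (Δ / 4) ^ τ ≤ #C ∧ #(closedNbhdIn G A C) ≤ r * M := by
    intro r
    induction r with
    | zero => exact fun _ => ⟨∅, by simp [closedNbhdIn]⟩
    | succ r ih =>
      intro hr
      obtain ⟨C, hCA, hC, hCcard, hZcard⟩ := ih (by omega)
      have hrm : (r : ℝ) ≤ m := mod_cast (by omega : r ≤ m)
      obtain ⟨b, hbS, hbC⟩ : ∃ b ∈ S,
          (#((closedNbhdIn G A C).bipartiteAbove G.Adj b) : ℝ) ≤ Δ / 4 := by
        refine exists_card_bipartiteAbove_le hSne (fun z hz => le_trans ?_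
          (hdeg z (closedNbhdIn_subset hCA hz))) (?_ : _ * Δ ≤ _)
        · simp only [bipartiteBelow, bipartiteAbove, G.adj_comm _ z]
          exact_mod_cast card_le_card (filter_subset_filter _ hSA)
        · have : r * M ≤ m * M := by gcongr
          nlinarith
      obtain ⟨C', hC'b, hC', hC'card⟩ := hG.exists_extension hτ hΔ hC (hS b hbS) hbC
      refine ⟨C', hC'b.trans (union_subset hCA (filter_subset _ _)), fun _ => hC', ?_, ?_⟩
      · push_cast
        linarith
      · have : (#(closedNbhdIn G A C') : ℝ) ≤
            #(closedNbhdIn G A C) + #(closedNbhdIn G A (A.bipartiteAbove G.Adj b)) :=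
          mod_cast (card_le_card ((closedNbhdIn_mono hC'b).trans_eq closedNbhdIn_union)).trans
            (card_union_le _ _)
        push_cast
        linarith [hball b hbS]
  obtain ⟨C, -, hC, hCcard, -⟩ := greedy m le_rfl
  have hCne : C.Nonempty := by
    rw [← card_pos]
    exact_mod_cast (by positivity : (0 : ℝ) < m * (Δ / 4) ^ τ).trans_le hCcard
  exact ((hG.1 C (hC hCne)).trans_le hmV).not_ge hCcard

end SecondNeighbourhoods

section LargeCombs

/-- The constant in the number of teeth of the combs found in critical graphs: at scale `U` there
are at least `combDensity η * U ^ (1 - 2 * η)` teeth. -/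
noncomputable def combDensity (η : ℝ) : ℝ :=
  (1 - 2 ^ (-η)) / 256

variable {d t w T n τ η Δ : ℝ}

lemma combDensity_pos (hη : 0 < η) : 0 < combDensity η :=
  div_pos (one_sub_two_rpow_neg_pos hη) (by norm_num)

lemma combDensity_lt : combDensity η < 1 / 256 := by
  have : (0 : ℝ) < 2 ^ (-η) := by positivity
  rw [combDensity]
  linarith

lemma lt_rpow_of_le_combDensity_mul_rpow {x : ℝ} (ht : 0 < t) (h : 192 ≤ combDensity η * t ^ x) :
    49152 < t ^ x := by
  have := mul_lt_mul_of_pos_right (combDensity_lt (η := η)) (Real.rpow_pos_of_pos ht x)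
  linarith

lemma rpow_neg_le_of_le_combDensity_mul_rpow (ht : 1 ≤ t) (hη : 0 < η)
    (h : 192 ≤ combDensity η * t ^ (η / 2)) : t ^ (-η) ≤ (1 - 2 ^ (-η)) / 2 := by
  have hle : t ^ (η / 2) ≤ t ^ η := Real.rpow_le_rpow_of_exponent_le ht (by linarith)
  have hpos := one_sub_two_rpow_neg_pos hη
  rw [combDensity] at h
  rw [Real.rpow_neg (by linarith), inv_le_iff_one_le_mul₀ (by positivity)]
  nlinarith

lemma rpow_le_rpow_mul_rpow {s : ℝ} (hn : 0 ≤ n) (hnT : n ≤ T ^ d * Δ) (hT : 1 ≤ T) (hΔ : 0 ≤ Δ)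
    (hτ : 0 ≤ τ) (hs : d * τ ≤ s) : n ^ τ ≤ T ^ s * Δ ^ τ := by
  calc n ^ τ ≤ (T ^ d * Δ) ^ τ := by gcongr
    _ = T ^ (d * τ) * Δ ^ τ := by
      rw [Real.mul_rpow (by positivity) hΔ, ← Real.rpow_mul (by linarith)]
    _ ≤ T ^ s * Δ ^ τ := by gcongr

variable {V : Type} {G : SimpleGraph V} {A S X : Finset V}

lemma TauCritical.not_isIndepSet [Fintype V] (hG : TauCritical τ G) (hτ : 0 ≤ τ) (hτ1 : τ ≤ 1)
    (hdτ : d * τ ≤ η / 2) (hη : η ≤ 1) (ht : 1 ≤ t) (hw : 1 ≤ w) (htη : 2 ≤ t ^ (η / 2))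
    (hn : Fintype.card V ≤ t ^ d * w) (hA : t * w ≤ 2 * #A) : ¬ G.IsIndepSet (A : Set V) := by
  intro hindep
  have hne : A.Nonempty := by
    rw [← card_pos]
    exact_mod_cast (by nlinarith : (0 : ℝ) < #A)
  have hlt := hG.1 A (isCograph_induce_of_isIndepSet hne hindep)
  have hle := rpow_le_rpow_mul_rpow (Nat.cast_nonneg _) hn ht (by linarith) hτ hdτ
  have hwτ : w ^ τ ≤ w := by simpa using Real.rpow_le_rpow_of_exponent_le hw hτ1
  have htt : t ^ (η / 2) * 2 ≤ t := by
    calc t ^ (η / 2) * 2 ≤ t ^ (η / 2) * t ^ (η / 2) := by gcongr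
      _ = t ^ η := by rw [← Real.rpow_add (by linarith), add_halves]
      _ ≤ t := by simpa using Real.rpow_le_rpow_of_exponent_le ht hη
  have : t ^ (η / 2) * w ^ τ ≤ t ^ (η / 2) * w := by gcongr
  nlinarith

variable [DecidableRel G.Adj]

lemma TauCritical.exists_balanced [Fintype V] (hG : TauCritical τ G) (hτ : 0 ≤ τ) (hτ1 : τ ≤ 1)
    (hdτ : d * τ ≤ η / 2) (hη : 0 < η) (hη1 : η ≤ 1) (ht : 1 ≤ t) (hw : 1 ≤ w)
    (hlarge : 192 ≤ combDensity η * t ^ (η / 2)) (hn : Fintype.card V ≤ t ^ d * w)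
    (hA : t * w ≤ #A) (hdeg : ∀ x ∈ A, (#(A.bipartiteAbove G.Adj x) : ℝ) ≤ w) :
    ∃ T Δ : ℝ, t ≤ T ∧ 0 < Δ ∧ T * Δ = t * w ∧ ∃ A' ⊆ A,
      (∀ x ∈ A', (#(A'.bipartiteAbove G.Adj x) : ℝ) ≤ Δ) ∧
      T ^ (1 - η) * Δ ≤ #{x ∈ A' | Δ / 2 < #(A'.bipartiteAbove G.Adj x)} := by
  have ht0 : 0 < t := by linarith
  obtain ⟨A', -, hA', hcard⟩ | ⟨l, hl, A', hA'A, hdeg', hcard⟩ :=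
    exists_isIndepSet_or_balanced G (sum_dyadicWeight_le (η := η)) hdeg
  · have : (#A : ℝ) ≤ 2 * #A' := mod_cast hcard
    have := lt_rpow_of_le_combDensity_mul_rpow ht0 hlarge
    exact absurd hA' (hG.not_isIndepSet hτ hτ1 hdτ hη1 ht hw (by linarith) hn (by linarith))
  have hTΔ : 2 ^ l * t * (w / 2 ^ l) = t * w := by field_simp
  refine ⟨2 ^ l * t, w / 2 ^ l, le_mul_of_one_le_left ht0.le (one_le_pow₀ one_le_two),
    by linarith, hTΔ, A', hA'A, hdeg', ?_⟩
  calc (2 ^ l * t) ^ (1 - η) * (w / 2 ^ l) = t ^ (-η) * (2 ^ l) ^ (-η) * (t * w) := by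
        rw [← hTΔ, sub_eq_neg_add, Real.rpow_add_one (by positivity),
          Real.mul_rpow (by positivity) ht0.le]
        ring
    _ ≤ dyadicWeight η l * #A := by
        have := dyadicWeight_pos hη l
        rw [dyadicWeight] at this ⊢
        gcongr
        exact rpow_neg_le_of_le_combDensity_mul_rpow ht hη hlarge
    _ ≤ _ := hcard

variable [DecidableEq V]

lemma exists_privateNbrs_of_lt_card_closedNbhdIn (hη : 0 < η) (hΔ : 0 < Δ) (hT : 0 < T)
    (hTη : 2 ≤ T ^ (1 - 2 * η)) (hXA : X ⊆ A) (hX : (#X : ℝ) ≤ Δ)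
    (hdeg : ∀ x ∈ X, (#(A.bipartiteAbove G.Adj x) : ℝ) ≤ Δ)
    (hcard : T ^ (1 - 2 * η) * Δ < #(closedNbhdIn G A X)) :
    ∃ I ⊆ X, ∃ U : ℝ, T ≤ U ∧ U ≤ T * Δ ∧ combDensity η * U ^ (1 - 2 * η) ≤ #I ∧
      ∀ i ∈ I, T * Δ / (64 * U) ≤ #(privateNbrs G.Adj I (closedNbhdIn G A X \ X) i) := by
  set Y := closedNbhdIn G A X \ X
  have hY : T ^ (1 - 2 * η) * Δ / 2 ≤ #Y := by
    have : (#Y : ℝ) + #X = #(closedNbhdIn G A X) :=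
      mod_cast card_sdiff_add_card_eq_card subset_closedNbhdIn
    nlinarith
  have hYne : Y.Nonempty := by
    rw [← card_pos]
    exact_mod_cast (by positivity : 0 < T ^ (1 - 2 * η) * Δ / 2).trans_le hY
  have hYA : Y ⊆ A := sdiff_subset.trans (closedNbhdIn_subset hXA)
  obtain ⟨l, hl, I, hIX, hI, hIcard⟩ := exists_privateNbrs_of_cover (r := G.Adj) hΔ hYne
    (sum_dyadicWeight_le (η := η))
    (fun x hx => le_trans (mod_cast card_le_card (filter_subset_filter _ hYA)) (hdeg x hx))
    fun y hy => by
      obtain ⟨hyN, hyX⟩ := mem_sdiff.1 hy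
      obtain ⟨x, hx, hxy⟩ := mem_biUnion.1 ((mem_union.1 hyN).resolve_left hyX)
      exact ⟨x, hx, ((mem_bipartiteAbove _).1 hxy).2⟩
  set Q : ℝ := 2 ^ l
  have hQ : 1 ≤ Q := one_le_pow₀ one_le_two
  have hQ0 : 0 < Q := by linarith
  rw [le_div_iff₀ hQ0, one_mul] at hl
  refine ⟨I, hIX, Q * T, by nlinarith, by nlinarith, ?_,
    fun i hi => le_trans (le_of_eq ?_) (hI i hi)⟩
  · have hσ := one_sub_two_rpow_neg_pos hη
    refine le_of_mul_le_mul_left ?_ (by positivity : 0 < 64 * (Δ / Q))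
    calc 64 * (Δ / Q) * (combDensity η * (Q * T) ^ (1 - 2 * η))
        = (1 - 2 ^ (-η)) / 2 * (Q ^ (1 - 2 * η) / Q) * (T ^ (1 - 2 * η) * Δ / 2) := by
          rw [combDensity, Real.mul_rpow hQ0.le hT.le]
          field_simp
          ring
      _ ≤ (1 - 2 ^ (-η)) / 2 * Q ^ (-η) * (T ^ (1 - 2 * η) * Δ / 2) := by
          rw [← Real.rpow_sub_one hQ0.ne']
          gcongr
          linarith
      _ ≤ (1 - 2 ^ (-η)) / 2 * Q ^ (-η) * #Y := by gcongr
      _ ≤ 64 * (Δ / Q) * #I := hIcard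
  · field_simp

variable [Fintype V]

lemma TauCritical.exists_rpow_mul_lt_card_closedNbhdIn (hG : TauCritical τ G) (hτ : 0 < τ)
    (hτ1 : τ ≤ 1) (hdτ : d * τ ≤ η / 2) (hΔ : 0 < Δ) (hT : 1 ≤ T) (hTη : 32 ≤ T ^ (η / 2))
    (hn : Fintype.card V ≤ T ^ d * Δ) (hSA : S ⊆ A)
    (hdeg : ∀ x ∈ A, (#(A.bipartiteAbove G.Adj x) : ℝ) ≤ Δ)
    (hS : ∀ x ∈ S, Δ / 2 < #(A.bipartiteAbove G.Adj x)) (hcard : T ^ (1 - η) * Δ ≤ #S) :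
    ∃ b ∈ S, T ^ (1 - 2 * η) * Δ < #(closedNbhdIn G A (A.bipartiteAbove G.Adj b)) := by
  have hT0 : 0 < T := by linarith
  have hTsq : T ^ η = T ^ (η / 2) * T ^ (η / 2) := by rw [← Real.rpow_add hT0, add_halves]
  have hm : T ^ η / 8 ≤ ⌊T ^ η / 4⌋₊ := by
    have := Nat.lt_floor_add_one (T ^ η / 4)
    nlinarith
  have hm0 : 0 < ⌊T ^ η / 4⌋₊ := by exact_mod_cast (by positivity : 0 < T ^ η / 8).trans_le hm
  refine hG.exists_lt_card_closedNbhdIn hτ hΔ (by positivity) hSA hdeg hS hm0 ?_ ?_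
  · calc 4 * ⌊T ^ η / 4⌋₊ * (T ^ (1 - 2 * η) * Δ)
        ≤ 4 * (T ^ η / 4) * (T ^ (1 - 2 * η) * Δ) := by
          gcongr
          exact Nat.floor_le (by positivity)
      _ = T ^ η * T ^ (1 - 2 * η) * Δ := by ring
      _ = T ^ (1 - η) * Δ := by rw [← Real.rpow_add hT0]; ring_nf
      _ ≤ #S := hcard
  · have h4 : (4 : ℝ) ^ τ ≤ 4 := by
      simpa using Real.rpow_le_rpow_of_exponent_le (by norm_num : (1 : ℝ) ≤ 4) hτ1
    calc (Fintype.card V : ℝ) ^ τ ≤ T ^ (η / 2) * Δ ^ τ :=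
          rpow_le_rpow_mul_rpow (Nat.cast_nonneg _) hn hT hΔ.le hτ.le hdτ
      _ ≤ T ^ η / 32 * Δ ^ τ := by
          gcongr
          nlinarith
      _ = T ^ η / 8 * (Δ ^ τ / 4) := by ring
      _ ≤ ⌊T ^ η / 4⌋₊ * (Δ ^ τ / 4 ^ τ) := by gcongr
      _ = ⌊T ^ η / 4⌋₊ * (Δ / 4) ^ τ := by rw [Real.div_rpow hΔ.le (by norm_num)]

lemma TauCritical.exists_large_privateNbrs (hG : TauCritical τ G) (hτ : 0 < τ) (hτ1 : τ ≤ 1)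
    (hdτ : d * τ ≤ η / 2) (hd : 1 ≤ d) (hη : 0 < η) (hη4 : η ≤ 1 / 4) (ht : 1 ≤ t) (hw : 1 ≤ w)
    (hlarge : 192 ≤ combDensity η * t ^ (η / 2)) (hn : Fintype.card V ≤ t ^ d * w)
    (hA : t * w ≤ #A) (hdeg : ∀ x ∈ A, (#(A.bipartiteAbove G.Adj x) : ℝ) ≤ w) :
    ∃ b ∈ A, ∃ I ⊆ A.bipartiteAbove G.Adj b, ∃ Y ⊆ A \ A.bipartiteAbove G.Adj b, ∃ U : ℝ,
      t ≤ U ∧ U ≤ t * w ∧ combDensity η * U ^ (1 - 2 * η) ≤ #I ∧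
      ∀ i ∈ I, t * w / (64 * U) ≤ #(privateNbrs G.Adj I Y i) := by
  obtain ⟨T, Δ, htT, hΔ, hTΔ, A', hA'A, hdeg', hcard⟩ :=
    hG.exists_balanced hτ.le hτ1 hdτ hη (by linarith) ht hw hlarge hn hA hdeg
  have hT : 1 ≤ T := ht.trans htT
  have hT0 : 0 < T := by linarith
  have hTη : 49152 < T ^ (η / 2) :=
    (lt_rpow_of_le_combDensity_mul_rpow (by linarith) hlarge).trans_le (by gcongr)
  have hTη' : T ^ (η / 2) ≤ T ^ (1 - 2 * η) := Real.rpow_le_rpow_of_exponent_le hT (by linarith)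
  have hnT : Fintype.card V ≤ T ^ d * Δ := by
    rw [← sub_add_cancel d 1, Real.rpow_add_one (by positivity), mul_assoc] at hn ⊢
    rw [hTΔ]
    exact hn.trans (by gcongr)
  obtain ⟨b, hbS, hb⟩ := hG.exists_rpow_mul_lt_card_closedNbhdIn hτ hτ1 hdτ hΔ hT (by linarith) hnT
    (filter_subset _ _) hdeg' (fun x hx => (mem_filter.1 hx).2) hcard
  have hbA' := filter_subset _ _ hbS
  obtain ⟨I, hI, U, hTU, hUT, hIcard, hpriv⟩ := exists_privateNbrs_of_lt_card_closedNbhdIn hη hΔ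
    hT0 (by linarith) (filter_subset _ _) (hdeg' b hbA')
    (fun x hx => hdeg' x (filter_subset _ _ hx)) hb
  rw [hTΔ] at hUT hpriv
  refine ⟨b, hA'A hbA', I, hI.trans (filter_subset_filter _ hA'A), _, fun y hy => ?_, U,
    htT.trans hTU, hUT, hIcard, hpriv⟩
  obtain ⟨hyN, hyX⟩ := mem_sdiff.1 hy
  have hyA' := closedNbhdIn_subset (filter_subset _ _) hyN
  exact mem_sdiff.2 ⟨hA'A hyA', fun h => hyX (mem_filter.2 ⟨hyA', (mem_filter.1 h).2⟩)⟩

end LargeCombs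

section CombsAndWG

variable {V : Type} {G : SimpleGraph V}

lemma WG_le [Fintype V] {s w : ℕ} {b : Fin s → V} {B : Fin s → Finset V} (hs : 0 < s)
    (h : MemFamilyF G b B ∨ MemFamilyF Gᶜ b B) (hw : ∀ i, #(B i) = w) : WG G ≤ w := by
  rw [WG, if_pos ⟨w, s, b, B, hs, h, hw⟩]
  exact Nat.sInf_le ⟨s, b, B, hs, h, hw⟩

variable [DecidableEq V] [DecidableRel G.Adj] {b : V} {I Y : Finset V}

lemma isCombIn_of_subset_privateNbrs {m : ℕ} {a : Fin m → V} {B : Fin m → Finset V} {k : ℝ}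
    {C D : Set V} (hCD : Disjoint C D) (ha : Function.Injective a) (haI : ∀ i, a i ∈ I)
    (hB : ∀ i, B i ⊆ privateNbrs G.Adj I Y (a i)) (hk : ∀ i, k ≤ #(B i)) (hIC : ↑I ⊆ C)
    (hYD : ↑Y ⊆ D) : IsCombIn G a B k C D := by
  have hBD : ∀ i, ↑(B i) ⊆ D := fun i =>
    (coe_subset.2 ((hB i).trans privateNbrs_subset)).trans hYD
  refine ⟨hCD, ha, fun i => hIC (haI i), hBD, fun i j hij => ?_, fun i j hij => ?_,
    fun i x hx => rel_of_mem_privateNbrs (hB i hx), fun i j hij x hx => ?_, hk⟩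
  · exact (disjoint_privateNbrs (ha.ne hij)).mono (hB i) (hB j)
  · exact Set.disjoint_left.1 hCD (hIC (haI i)) (hBD j hij)
  · exact (rel_iff_eq_of_mem_privateNbrs (hB j hx) (haI i)).not.2 (ha.ne hij)

variable [Fintype V]

lemma WG_le_ceil_of_privateNbrs (hI : I.Nonempty) (hIb : ∀ i ∈ I, G.Adj b i)
    (hYb : ∀ y ∈ Y, ¬ G.Adj b y)
    (hpriv : ∀ i ∈ I, (Fintype.card V : ℝ) / #I ^ 2 ≤ #(privateNbrs G.Adj I Y i)) :
    WG G ≤ ⌈(Fintype.card V : ℝ) / #I ^ 2⌉₊ := by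
  have : Nonempty V := hI.to_subtype.map Subtype.val
  have hcardI := hI.card_pos
  choose! B hB hBcard using fun i hi => exists_subset_card_eq (Nat.ceil_le.2 (hpriv i hi))
  let f := I.equivFin.symm
  have hcard : ∀ i, #(B (f i)) = ⌈(Fintype.card V : ℝ) / #I ^ 2⌉₊ := fun i => hBcard _ (f i).2
  have hcomb : IsCombIn G (fun i => (f i : V)) (fun i => B (f i)) (Fintype.card V / #I ^ 2)
      (G.neighborSet b) {x | ¬ G.Adj b x} :=
    isCombIn_of_subset_privateNbrs (Set.disjoint_left.2 fun _ h h' => h' h)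
      (Subtype.val_injective.comp f.injective) (fun i => (f i).2) (fun i => hB _ (f i).2)
      (fun i => (hcard i).symm ▸ Nat.le_ceil _) hIb hYb
  refine WG_le hcardI (.inl ⟨⟨b, hcomb⟩, fun i j => by rw [hcard, hcard], fun i => ?_⟩) hcard
  rw [← card_pos, hcard, Nat.ceil_pos]
  positivity

lemma WG_lt_div_sq {x : ℝ} (hx : 0 < x) (hxI : 2 * x ≤ #I)
    (hxV : 2 * x ^ 2 ≤ Fintype.card V) (hIb : ∀ i ∈ I, G.Adj b i) (hYb : ∀ y ∈ Y, ¬ G.Adj b y)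
    (hpriv : ∀ i ∈ I, (Fintype.card V : ℝ) / #I ^ 2 ≤ #(privateNbrs G.Adj I Y i)) :
    (WG G : ℝ) < Fintype.card V / x ^ 2 := by
  have hI : I.Nonempty := by
    rw [← card_pos]
    exact_mod_cast (by positivity : 0 < 2 * x).trans_le hxI
  have hone : 2 ≤ Fintype.card V / x ^ 2 := by rwa [le_div_iff₀ (by positivity)]
  calc (WG G : ℝ) ≤ ⌈(Fintype.card V : ℝ) / #I ^ 2⌉₊ :=
        mod_cast WG_le_ceil_of_privateNbrs hI hIb hYb hpriv
    _ < Fintype.card V / #I ^ 2 + 1 := Nat.ceil_lt_add_one (by positivity)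
    _ ≤ Fintype.card V / (2 * x) ^ 2 + 1 := by gcongr
    _ = Fintype.card V / x ^ 2 / 4 + 1 := by ring
    _ < Fintype.card V / x ^ 2 := by linarith

section Exponents

variable {c d s t w η U : ℝ}

lemma two_mul_rpow_le_of_le_mul_rpow (hd : 0 ≤ d) (hη : 0 ≤ η) (hηd : η * (d + 2) ≤ 1 / 4)
    (ht : 1 ≤ t) (hc : 0 < c) (hct : 2 ≤ c * t ^ (1 / 2 : ℝ)) (hU : t ^ (d + 1) ≤ U)
    (hs : c * U ^ (1 - 2 * η) ≤ s) : 2 * t ^ d ≤ s := by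
  calc 2 * t ^ d ≤ c * t ^ (1 / 2 : ℝ) * t ^ d := by gcongr
    _ = c * t ^ (1 / 2 + d) := by rw [Real.rpow_add (by linarith)]; ring
    _ ≤ c * t ^ ((d + 1) * (1 - 2 * η)) := by gcongr; nlinarith
    _ = c * (t ^ (d + 1)) ^ (1 - 2 * η) := by rw [Real.rpow_mul (by linarith)]
    _ ≤ c * U ^ (1 - 2 * η) := by gcongr; nlinarith
    _ ≤ s := hs

lemma mul_rpow_mul_le_mul_sq (hd : 0 ≤ d) (hη : 0 ≤ η) (hηd : η * (d + 2) ≤ 1 / 4)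
    (ht : 1 ≤ t) (hc : 0 < c) (hct : 8 ≤ c * t ^ (1 / 2 : ℝ)) (hU : t ^ (d + 1) ≤ U)
    (hs : c * U ^ (1 - 2 * η) ≤ s) : 64 * t ^ d * U ≤ t * s ^ 2 := by
  have ht0 : 0 < t := by linarith
  have hU0 : 0 < U := by linarith [Real.rpow_pos_of_pos ht0 (d + 1)]
  have hsq : (t ^ (1 / 2 : ℝ)) ^ 2 = t := by rw [← Real.rpow_mul_natCast ht0.le]; norm_num
  calc 64 * t ^ d * U = 8 ^ 2 * t ^ d * U := by norm_num
    _ ≤ (c * t ^ (1 / 2 : ℝ)) ^ 2 * t ^ ((d + 1) * (1 - 4 * η)) * U := by gcongr; nlinarith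
    _ = c ^ 2 * t * (t ^ (d + 1)) ^ (1 - 4 * η) * U := by
      rw [mul_pow, hsq, Real.rpow_mul ht0.le]
    _ ≤ c ^ 2 * t * U ^ (1 - 4 * η) * U := by gcongr; nlinarith
    _ = t * (c * U ^ (1 - 2 * η)) ^ 2 := by
      rw [mul_assoc _ _ U, ← Real.rpow_add_one hU0.ne', mul_pow, ← Real.rpow_mul_natCast hU0.le]
      push_cast
      ring_nf
    _ ≤ t * s ^ 2 := by gcongr

lemma le_two_mul_rpow_of_div_le_WG (hd : 0 ≤ d) (hη : 0 ≤ η) (hηd : η * (d + 2) ≤ 1 / 4)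
    (ht : 1 ≤ t) (hw : 0 < w) (hc : 0 < c) (hct : 8 ≤ c * t ^ (1 / 2 : ℝ))
    (hn : Fintype.card V = t ^ d * w) (hWG : Fintype.card V / t ^ (2 * d) ≤ WG G)
    (hIb : ∀ i ∈ I, G.Adj b i) (hYb : ∀ y ∈ Y, ¬ G.Adj b y) (hUw : U ≤ t * w)
    (hI : c * U ^ (1 - 2 * η) ≤ #I)
    (hpriv : ∀ i ∈ I, t * w / (64 * U) ≤ #(privateNbrs G.Adj I Y i)) :
    U ≤ 2 * t ^ (d + 1) := by
  by_contra! hlt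
  have ht0 : 0 < t := by linarith
  have hU : t ^ (d + 1) ≤ U := by linarith [Real.rpow_pos_of_pos ht0 (d + 1)]
  have hU0 : 0 < U := (Real.rpow_pos_of_pos ht0 _).trans_le hU
  have hI2 := two_mul_rpow_le_of_le_mul_rpow hd hη hηd ht hc (by linarith) hU hI
  have hI0 : (0 : ℝ) < #I := (by positivity : 0 < 2 * t ^ d).trans_le hI2
  have hw2 : 2 * t ^ d < w := by
    refine lt_of_mul_lt_mul_left ?_ ht0.le
    calc t * (2 * t ^ d) = 2 * t ^ (d + 1) := by rw [Real.rpow_add_one ht0.ne']; ring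
      _ < U := hlt
      _ ≤ t * w := hUw
  have hteeth : (Fintype.card V : ℝ) / #I ^ 2 ≤ t * w / (64 * U) := by
    rw [hn, div_le_div_iff₀ (by positivity) (by positivity)]
    calc t ^ d * w * (64 * U) = 64 * t ^ d * U * w := by ring
      _ ≤ t * #I ^ 2 * w := mul_le_mul_of_nonneg_right
        (mul_rpow_mul_le_mul_sq hd hη hηd ht hc hct hU hI) hw.le
      _ = t * w * #I ^ 2 := by ring
  refine (WG_lt_div_sq (by positivity) hI2 ?_ hIb hYb fun i hi =>
    hteeth.trans (hpriv i hi)).not_ge ?_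
  · rw [hn]
    nlinarith [Real.rpow_pos_of_pos ht0 d]
  · rwa [← Real.rpow_mul_natCast ht0.le, mul_comm d, Nat.cast_ofNat]

lemma TauCritical.exists_large_privateNbrs_of_div_le_WG {τ : ℝ} {A : Finset V}
    (hG : TauCritical τ G) (hτ : 0 < τ) (hdτ : d * τ ≤ η / 2) (hd : 1 ≤ d) (hη : 0 < η)
    (hηd : η * (d + 2) ≤ 1 / 4) (ht : 1 ≤ t) (hw : 1 ≤ w)
    (hlarge : 192 ≤ combDensity η * t ^ (η / 2)) (hn : Fintype.card V = t ^ d * w)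
    (hWG : Fintype.card V / t ^ (2 * d) ≤ WG G) (hA : t * w ≤ #A)
    (hdeg : ∀ x ∈ A, (#(A.bipartiteAbove G.Adj x) : ℝ) ≤ w) :
    ∃ b ∈ A, ∃ I ⊆ A.bipartiteAbove G.Adj b, ∃ Y ⊆ A \ A.bipartiteAbove G.Adj b, ∃ U : ℝ,
      t ≤ U ∧ 128 * U ≤ t ^ (d + 2) ∧ combDensity η * U ^ (1 - 2 * η) ≤ #I ∧
      ∀ i ∈ I, t * w / (64 * U) ≤ #(privateNbrs G.Adj I Y i) := by
  have ht0 : 0 < t := by linarith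
  obtain ⟨b, hb, I, hI, Y, hY, U, htU, hUw, hIcard, hpriv⟩ :=
    hG.exists_large_privateNbrs hτ (by nlinarith) hdτ hd hη (by nlinarith) ht hw hlarge hn.le hA
      hdeg
  refine ⟨b, hb, I, hI, Y, hY, U, htU, ?_, hIcard, hpriv⟩
  have hct : 8 ≤ combDensity η * t ^ (1 / 2 : ℝ) := by
    calc 8 ≤ combDensity η * t ^ (η / 2) := by linarith
      _ ≤ combDensity η * t ^ (1 / 2 : ℝ) := by
        have := combDensity_pos hη
        gcongr
        nlinarith
  have hU : U ≤ 2 * t ^ (d + 1) := le_two_mul_rpow_of_div_le_WG (by linarith) hη.le hηd ht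
    (by linarith) (combDensity_pos hη) hct hn hWG (fun i hi => (mem_filter.1 (hI hi)).2)
    (fun y hy h => (mem_sdiff.1 (hY hy)).2 (mem_filter.2 ⟨(mem_sdiff.1 (hY hy)).1, h⟩))
    hUw hIcard hpriv
  have ht256 : 256 ≤ t := by
    have : t ^ (η / 2) ≤ t := Real.rpow_le_self_of_one_le ht (by nlinarith)
    linarith [lt_rpow_of_le_combDensity_mul_rpow ht0 hlarge]
  calc 128 * U ≤ 256 * t ^ (d + 1) := by linarith
    _ ≤ t * t ^ (d + 1) := by gcongr
    _ = t ^ (d + 2) := by rw [← Real.rpow_one_add' ht0.le (by linarith)]; ring_nf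

end Exponents

end CombsAndWG

section Spreading

lemma exists_maximal_matching {ι α : Type*} [Finite ι] [Nonempty α] [DecidableEq α]
    (R : ι → α → Prop) (I : Finset α) :
    ∃ (J : Finset ι) (f : ι → α), Set.InjOn f J ∧ (∀ j ∈ J, f j ∈ I ∧ R j (f j)) ∧
      ∀ i ∈ I \ J.image f, ∀ j ∉ J, ¬ R j i := by
  classical
  have := Fintype.ofFinite ι
  let IsMatching (J : Finset ι) (f : ι → α) : Prop :=
    Set.InjOn f J ∧ ∀ j ∈ J, f j ∈ I ∧ R j (f j)
  obtain ⟨J, hJ, hmax⟩ := ({J | ∃ f, IsMatching J f} : Finset (Finset ι)).exists_max_image card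
    ⟨∅, by simp [IsMatching]⟩
  obtain ⟨f, hf, hfR⟩ := (mem_filter.1 hJ).2
  refine ⟨J, f, hf, hfR, fun i hi j hj hR => ?_⟩
  obtain ⟨hiI, hif⟩ := mem_sdiff.1 hi
  have heq : Set.EqOn (Function.update f j i) f J := fun j' hj' =>
    Function.update_of_ne (ne_of_mem_of_not_mem hj' hj) _ _
  have hlarger : IsMatching (insert j J) (Function.update f j i) := by
    refine ⟨?_, fun j' hj' => ?_⟩
    · rw [coe_insert, Set.injOn_insert (mod_cast hj), heq.injOn_iff, heq.image_eq,
        Function.update_self, ← coe_image]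
      exact ⟨hf, mod_cast hif⟩
    · obtain rfl | hj' := mem_insert.1 hj'
      · rw [Function.update_self]
        exact ⟨hiI, hR⟩
      · rw [heq hj']
        exact hfR j' hj'
  have := hmax _ (mem_filter.2 ⟨mem_univ _, _, hlarger⟩)
  rw [card_insert_of_notMem hj] at this
  omega

lemma sum_card_inter_le_card {ι α : Type*} [DecidableEq α] {s : Finset ι} {B : ι → Finset α}
    (hB : (s : Set ι).PairwiseDisjoint B) (C : Finset α) : ∑ i ∈ s, #(B i ∩ C) ≤ #C := by
  rw [← card_biUnion fun i hi j hj hij =>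
    (hB hi hj hij).mono inter_subset_left inter_subset_left]
  exact card_le_card (biUnion_subset.2 fun _ _ => inter_subset_right)

variable {ι α : Type*} [Fintype ι] [DecidableEq α] {A : ι → Finset α} {δ w : ℝ}

lemma half_le_sum_card_inter {B : Finset α} {J : Finset ι} (hδ : 0 ≤ δ) (hB : δ ≤ #B)
    (hBA : B ⊆ univ.biUnion A)
    (hJ : ∀ j ∉ J, (#(B ∩ A j) : ℝ) ≤ δ / (2 * Fintype.card ι)) :
    δ / 2 ≤ ∑ j ∈ J, (#(B ∩ A j) : ℝ) := by
  classical
  have hcover : (#B : ℝ) ≤ ∑ j, (#(B ∩ A j) : ℝ) := by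
    exact_mod_cast (card_le_card (subset_inter subset_rfl hBA)).trans
      (by rw [inter_biUnion]; exact card_biUnion_le)
  have hcompl : ∑ j ∈ Jᶜ, (#(B ∩ A j) : ℝ) ≤ δ / 2 := by
    calc ∑ j ∈ Jᶜ, (#(B ∩ A j) : ℝ) ≤ #Jᶜ * (δ / (2 * Fintype.card ι)) := by
          rw [← nsmul_eq_mul]
          exact sum_le_card_nsmul _ _ _ fun j hj => hJ j (mem_compl.1 hj)
      _ ≤ Fintype.card ι * (δ / (2 * Fintype.card ι)) := by
          gcongr
          exact card_le_univ _
      _ = δ / 2 * (Fintype.card ι / Fintype.card ι) := by ring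
      _ ≤ δ / 2 := mul_le_of_le_one_right (by positivity) (div_self_le_one _)
  rw [← sum_add_sum_compl J] at hcover
  linarith

lemma exists_matching_large_inter {κ : Type*} [Nonempty κ] {I : Finset κ}
    {B : κ → Finset α} (hδ : 0 ≤ δ) (hA : ∀ j, (#(A j) : ℝ) ≤ w) (hB : ∀ i ∈ I, δ ≤ #(B i))
    (hBA : ∀ i ∈ I, B i ⊆ univ.biUnion A) (hdisj : (I : Set κ).PairwiseDisjoint B) :
    ∃ (J : Finset ι) (f : ι → κ), Set.InjOn f J ∧
      (∀ j ∈ J, f j ∈ I ∧ δ / (2 * Fintype.card ι) ≤ #(B (f j) ∩ A j)) ∧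
      δ * #I ≤ (2 * w + δ) * #J := by
  classical
  obtain ⟨J, f, hf, hfI, hmax⟩ := exists_maximal_matching
    (fun (j : ι) i => δ / (2 * Fintype.card ι) ≤ #(B i ∩ A j)) I
  refine ⟨J, f, hf, hfI, ?_⟩
  set R := I \ J.image f
  have hRI : R ⊆ I := sdiff_subset
  have hunmatched : #R * (δ / 2) ≤ #J * w := by
    calc #R * (δ / 2) ≤ ∑ i ∈ R, ∑ j ∈ J, (#(B i ∩ A j) : ℝ) := by
          rw [← nsmul_eq_mul]
          exact card_nsmul_le_sum _ _ _ fun i hi => half_le_sum_card_inter hδ (hB i (hRI hi))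
            (hBA i (hRI hi)) fun j hj => (not_le.1 (hmax i hi j hj)).le
      _ = ∑ j ∈ J, ∑ i ∈ R, (#(B i ∩ A j) : ℝ) := sum_comm
      _ ≤ #J * w := by
          rw [← nsmul_eq_mul]
          refine sum_le_card_nsmul _ _ _ fun j _ => le_trans ?_ (hA j)
          exact_mod_cast sum_card_inter_le_card (hdisj.subset (coe_subset.2 hRI)) (A j)
  have hIR : (#I : ℝ) ≤ #R + #J := by
    exact_mod_cast card_le_card_sdiff_add_card.trans (Nat.add_le_add_left card_image_le _)
  nlinarith

end Spreading

section CombsInBlockades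

variable {V : Type} {G : SimpleGraph V} {t : ℕ} {A : Fin t → Finset V}

lemma IsBlockade.cast_card_biUnion [DecidableEq V] {w : ℝ} (hA : IsBlockade A)
    (hw : ∀ i, (#(A i) : ℝ) = w) : (#(univ.biUnion A) : ℝ) = t * w := by
  rw [card_biUnion fun i _ j _ hij => hA.2 i j hij]
  simp [hw]

lemma coe_bipartiteAbove_biUnion [DecidableEq V] [DecidableRel G.Adj] (b : V) :
    ((univ.biUnion A).bipartiteAbove G.Adj b : Set V) = {x | (∃ i, x ∈ A i) ∧ G.Adj b x} := by
  ext
  simp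

lemma coe_biUnion_sdiff_bipartiteAbove [DecidableEq V] [DecidableRel G.Adj] (b : V) :
    (↑(univ.biUnion A \ (univ.biUnion A).bipartiteAbove G.Adj b) : Set V) =
      {x | (∃ i, x ∈ A i) ∧ ¬ G.Adj b x} := by
  ext x
  have hx : x ∈ univ.biUnion A ↔ ∃ i, x ∈ A i := by simp
  simp only [mem_coe, mem_sdiff, mem_bipartiteAbove, hx, Set.mem_ofPred_eq]
  tauto

lemma exists_isCombIn_minor_of_privateNbrs [DecidableEq V] [DecidableRel G.Adj] {b : V}
    {I Y : Finset V} {β k w : ℝ} (hA : ∀ j, (#(A j) : ℝ) ≤ w) (hβ : 0 ≤ β) (hβw : β ≤ w)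
    (hk : k ≤ β / (2 * t)) (hI : I ⊆ (univ.biUnion A).bipartiteAbove G.Adj b)
    (hY : Y ⊆ univ.biUnion A \ (univ.biUnion A).bipartiteAbove G.Adj b)
    (hpriv : ∀ i ∈ I, β ≤ #(privateNbrs G.Adj I Y i)) :
    ∃ (m : ℕ) (a : Fin m → V) (A' : Fin m → Finset V) (g : Fin m → Fin t),
      IsCombIn G a A' k {x | (∃ i, x ∈ A i) ∧ G.Adj b x} {x | (∃ i, x ∈ A i) ∧ ¬ G.Adj b x} ∧
      StrictMono g ∧ (∀ j, A' j ⊆ A (g j)) ∧ (∀ j, #(A' j) = ⌈β / (2 * t)⌉₊) ∧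
      β * #I ≤ 3 * w * m := by
  have : Nonempty V := ⟨b⟩
  obtain ⟨J, f, hf, hfI, hJ⟩ := exists_matching_large_inter hβ hA hpriv
    (fun i _ => privateNbrs_subset.trans (hY.trans sdiff_subset))
    fun i _ j _ hij => disjoint_privateNbrs hij
  rw [Fintype.card_fin] at hfI
  let g := J.orderEmbOfFin rfl
  have hg : ∀ j, g j ∈ J := J.orderEmbOfFin_mem rfl
  choose A' hA' hcard using fun j => exists_subset_card_eq (Nat.ceil_le.2 (hfI (g j) (hg j)).2)
  refine ⟨#J, f ∘ g, A', g, isCombIn_of_subset_privateNbrs ?_ ?_ (fun j => (hfI _ (hg j)).1)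
    (fun j => (hA' j).trans inter_subset_left) (fun j => ?_)
    ((coe_subset.2 hI).trans_eq (coe_bipartiteAbove_biUnion b))
    ((coe_subset.2 hY).trans_eq (coe_biUnion_sdiff_bipartiteAbove b)),
    g.strictMono, fun j => (hA' j).trans inter_subset_right, hcard, hJ.trans ?_⟩
  · exact Set.disjoint_left.2 fun x hx hx' => hx'.2 hx.2
  · exact fun i j hij => g.injective (hf (hg i) (hg j) hij)
  · exact hk.trans (hcard j ▸ Nat.le_ceil _)
  · gcongr
    linarith

lemma rpow_le_of_mul_le {c d s t m η U : ℝ} (hη : 0 ≤ η) (hd : 0 ≤ d) (ht : 1 ≤ t)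
    (hct : 192 ≤ c * t ^ (η / 2)) (hU : 0 < U) (hUt : U ≤ t ^ (d + 2))
    (hs : c * U ^ (1 - 2 * η) ≤ s) (hm : t * s ≤ 192 * U * m) :
    t ^ (1 - 4 * (η * (d + 2))) ≤ m := by
  have ht0 : 0 < t := by linarith
  have hc : 0 ≤ c := by
    have : 0 < t ^ (η / 2) := by positivity
    by_contra! h
    nlinarith
  have hs0 : 0 ≤ s := le_trans (by positivity) hs
  refine le_of_mul_le_mul_left ?_ (by positivity : 0 < 192 * U)
  calc 192 * U * t ^ (1 - 4 * (η * (d + 2)))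
      ≤ c * t ^ (η / 2) * U * t ^ (1 - 4 * (η * (d + 2))) := by gcongr
    _ = c * U ^ (1 - 2 * η) * (t ^ (η / 2) * U ^ (2 * η) * t ^ (1 - 4 * (η * (d + 2)))) := by
      nth_rw 1 [← Real.rpow_one U, ← sub_add_cancel 1 (2 * η), Real.rpow_add hU]
      ring
    _ ≤ s * (t ^ (η / 2) * (t ^ (d + 2)) ^ (2 * η) * t ^ (1 - 4 * (η * (d + 2)))) := by gcongr
    _ = s * t ^ (1 + η / 2 - 2 * (η * (d + 2))) := by
      rw [← Real.rpow_mul ht0.le, ← Real.rpow_add ht0, ← Real.rpow_add ht0]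
      ring_nf
    _ ≤ s * t ^ (1 : ℝ) := by
      gcongr
      nlinarith
    _ ≤ 192 * U * m := by rwa [Real.rpow_one, mul_comm]

theorem TauCritical.exists_isCombIn_minor [Fintype V] {τ d η : ℝ} (hG : TauCritical τ G)
    (hτ : 0 < τ) (hdτ : d * τ ≤ η / 2) (hd : 1 ≤ d) (hη : 0 < η) (hηd : η * (d + 2) ≤ 1 / 4)
    (hA : IsBlockade A) (hcard : ∀ i, (#(A i) : ℝ) = Fintype.card V / t ^ d)
    (hWG : Fintype.card V / t ^ (2 * d) ≤ (WG G : ℝ)) (ht : 1 ≤ t)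
    (hlarge : 192 ≤ combDensity η * t ^ (η / 2))
    (hdeg : ∀ a, (∃ i, a ∈ A i) →
      (({x | (∃ i, x ∈ A i) ∧ G.Adj a x} : Set V).ncard : ℝ) < Fintype.card V / t ^ d) :
    ∃ (b : V) (t' : ℕ) (as : Fin t' → V) (A' : Fin t' → Finset V) (g : Fin t' → Fin t),
      (∃ i, b ∈ A i) ∧ (t : ℝ) ^ (1 - 4 * (η * (d + 2))) ≤ t' ∧
      IsCombIn G as A' (Fintype.card V / t ^ (2 * d + 2))
        {x | (∃ i, x ∈ A i) ∧ G.Adj b x} {x | (∃ i, x ∈ A i) ∧ ¬ G.Adj b x} ∧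
      StrictMono g ∧ (∀ j, A' j ⊆ A (g j)) ∧ (∀ j, (A' j).Nonempty) ∧
      (∀ i j, #(A' i) = #(A' j)) ∧
      ∀ j, (Fintype.card V : ℝ) / t ^ (2 * d + 2) ≤ #(A' j) := by
  classical
  have ht1 : (1 : ℝ) ≤ t := mod_cast ht
  have ht0 : (0 : ℝ) < t := by linarith
  set w : ℝ := Fintype.card V / t ^ d with hw
  have hw1 : 1 ≤ w := hcard ⟨0, ht⟩ ▸ mod_cast (hA.1 _).card_pos
  have hn : (Fintype.card V : ℝ) = t ^ d * w := by rw [hw]; field_simp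
  obtain ⟨b, hb, I, hI, Y, hY, U, htU, hUt, hIcard, hpriv⟩ :=
    hG.exists_large_privateNbrs_of_div_le_WG hτ hdτ hd hη hηd ht1 hw1 hlarge hn hWG
      (hA.cast_card_biUnion hcard).ge fun x hx => by
        rw [← Set.ncard_coe_finset, coe_bipartiteAbove_biUnion]
        exact (hdeg x (by simpa using hx)).le
  have hU0 : 0 < U := by linarith
  have hβw : t * w / (64 * U) ≤ w := by
    rw [div_le_iff₀ (by positivity)]
    nlinarith
  have hwidth : Fintype.card V / t ^ (2 * d + 2) ≤ t * w / (64 * U) / (2 * t) := by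
    calc Fintype.card V / t ^ (2 * d + 2) = w / (t : ℝ) ^ (d + 2) := by
          rw [hn, two_mul, add_assoc, Real.rpow_add ht0, mul_div_mul_left _ _ (by positivity)]
      _ ≤ w / (128 * U) := by gcongr
      _ = t * w / (64 * U) / (2 * t) := by field_simp; norm_num
  obtain ⟨m, as, A', g, hcomb, hg, hA'A, hA'card, hm⟩ := exists_isCombIn_minor_of_privateNbrs
    (fun j => (hcard j).le) (by positivity) hβw hwidth hI hY hpriv
  refine ⟨b, m, as, A', g, by simpa using hb, ?_, hcomb, hg, hA'A, fun j => ?_,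
    fun i j => by rw [hA'card, hA'card], fun j => hwidth.trans (hA'card j ▸ Nat.le_ceil _)⟩
  · refine rpow_le_of_mul_le hη.le (by linarith) ht1 hlarge hU0 (by linarith) hIcard ?_
    rw [div_mul_eq_mul_div, div_le_iff₀ (by positivity)] at hm
    refine le_of_mul_le_mul_left ?_ (by linarith : 0 < w)
    linarith
  · rw [← card_pos, hA'card, Nat.ceil_pos]
    positivity

lemma exists_forall_ge_le_mul_rpow {c x : ℝ} (hc : 0 < c) (hx : 0 < x) (K : ℝ) :
    ∃ L : ℕ, 0 < L ∧ ∀ t : ℕ, L ≤ t → K ≤ c * t ^ x := by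
  have htop := ((tendsto_rpow_atTop hx).const_mul_atTop hc).comp
    (tendsto_natCast_atTop_atTop (R := ℝ))
  obtain ⟨L, hL⟩ := Filter.eventually_atTop.1
    ((htop.eventually_ge_atTop K).and (Filter.eventually_ge_atTop 1))
  exact ⟨L, (hL L le_rfl).2, fun t ht => (hL t ht).1⟩

end CombsInBlockades

theorem main_lemma_general (d : ℝ) (hd : 1 ≤ d) (ε : ℝ) (hε : 0 < ε) (hε1 : ε ≤ 1) :
    ∃ (τ₀ : ℝ) (L₀ : ℕ), 0 < τ₀ ∧ 0 < L₀ ∧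
      ∀ (V : Type) (_ : Fintype V) (G : SimpleGraph V) (τ : ℝ) (t : ℕ)
        (A : Fin t → Finset V),
        0 < τ → τ < τ₀ → TauCritical τ G → IsBlockade A →
        (∀ i, (#(A i) : ℝ) = Fintype.card V / t ^ d) →
        Fintype.card V / t ^ (2 * d) ≤ (WG G : ℝ) → L₀ ≤ t →
        (∀ a, (∃ i, a ∈ A i) →
          (({x | (∃ i, x ∈ A i) ∧ G.Adj a x} : Set V).ncard : ℝ) < Fintype.card V / t ^ d) →
        ∃ (b : V) (t' : ℕ) (as : Fin t' → V) (A' : Fin t' → Finset V) (g : Fin t' → Fin t),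
          (∃ i, b ∈ A i) ∧ (t : ℝ) ^ (1 - ε) ≤ t' ∧
          IsCombIn G as A' (Fintype.card V / t ^ (2 * d + 2))
            {x | (∃ i, x ∈ A i) ∧ G.Adj b x} {x | (∃ i, x ∈ A i) ∧ ¬ G.Adj b x} ∧
          StrictMono g ∧ (∀ j, A' j ⊆ A (g j)) ∧ (∀ j, (A' j).Nonempty) ∧
          (∀ i j, #(A' i) = #(A' j)) ∧
          ∀ j, (Fintype.card V : ℝ) / t ^ (2 * d + 2) ≤ #(A' j) := by
  set η := ε / (4 * (d + 2)) with hη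
  have hηd : 4 * (η * (d + 2)) = ε := by
    rw [hη]
    field_simp
  have hη0 : 0 < η := by positivity
  obtain ⟨L₀, hL₀, hlarge⟩ := exists_forall_ge_le_mul_rpow (combDensity_pos hη0) (half_pos hη0) 192
  refine ⟨η / (2 * d), L₀, by positivity, hL₀, ?_⟩
  intro V _ G τ t A hτ hττ₀ hG hA hcard hWG ht hdeg
  have hdτ : d * τ ≤ η / 2 := by
    rw [lt_div_iff₀ (by positivity)] at hττ₀
    linarith
  rw [← hηd]
  exact hG.exists_isCombIn_minor hτ hdτ hd hη0 (by linarith) hA hcard hWG (hL₀.trans_le ht)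
    (hlarge t ht) hdeg

/-- Main lemma. Given `k ≥ 2` and a real `d ≥ 2`, there are `τ₀ = τ₀(k,d) > 0` and a
positive integer `L₀ = L₀(k,d)` such that: for every `0 < τ < τ₀`, every strongly
`(k choose 2)`-free `τ`-critical graph `G`, and every equicardinal blockade
`𝓐 = (A i : i < t)` in `G` of width exactly `|G|/t^d`, with `|G|/t^{2d} ≤ W_G`,
`L₀ ≤ t ≤ 2|G|^{1/d}`, and such that every vertex of the union `A` has fewer than
`|G|/t^d` neighbours in `A`, there exist `b ∈ A`, an integer `t' ≥ t^{1/8}` and a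
`(t', |G|/t^{2d+2})`-comb `((a j, A' j) : j < t')` in `(E_b ∩ A, ¬E_b ∩ A)` such that
`(A' j : j < t')` is an equicardinal minor of `𝓐` of width at least `|G|/t^{2d+2}`. -/
theorem main_lemma (k : ℕ) (hk : 2 ≤ k) (d : ℝ) (hd : 2 ≤ d) :
    ∃ (τ₀ : ℝ) (L₀ : ℕ), 0 < τ₀ ∧ 0 < L₀ ∧
      ∀ (V : Type) (_ : Fintype V) (G : SimpleGraph V) (τ : ℝ) (t : ℕ)
        (A : Fin t → Finset V),
        0 < τ → τ < τ₀ →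
        StronglyKC2Free G k → TauCritical τ G →
        IsBlockade A →
        (∀ i, ((A i).card : ℝ) = (Fintype.card V : ℝ) / (t : ℝ) ^ d) →
        (Fintype.card V : ℝ) / (t : ℝ) ^ (2 * d) ≤ (WG G : ℝ) →
        L₀ ≤ t → (t : ℝ) ≤ 2 * (Fintype.card V : ℝ) ^ (1 / d) →
        (∀ a, (∃ i, a ∈ A i) →
          ((({x | (∃ i, x ∈ A i) ∧ G.Adj a x} : Set V).ncard : ℝ)
            < (Fintype.card V : ℝ) / (t : ℝ) ^ d)) →
        ∃ (b : V) (t' : ℕ) (as : Fin t' → V) (A' : Fin t' → Finset V)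
          (g : Fin t' → Fin t),
          (∃ i, b ∈ A i) ∧
          (t : ℝ) ^ ((1 : ℝ) / 8) ≤ (t' : ℝ) ∧
          IsCombIn G as A' ((Fintype.card V : ℝ) / (t : ℝ) ^ (2 * d + 2))
            {x | (∃ i, x ∈ A i) ∧ G.Adj b x} {x | (∃ i, x ∈ A i) ∧ ¬ G.Adj b x} ∧
          StrictMono g ∧ (∀ j, A' j ⊆ A (g j)) ∧ (∀ j, (A' j).Nonempty) ∧
          (∀ i j, (A' i).card = (A' j).card) ∧
          (∀ j, (Fintype.card V : ℝ) / (t : ℝ) ^ (2 * d + 2) ≤ ((A' j).card : ℝ)) := by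
  obtain ⟨τ₀, L₀, hτ₀, hL₀, h⟩ :=
    main_lemma_general d (by linarith) (7 / 8) (by norm_num) (by norm_num)
  rw [show (1 - 7 / 8 : ℝ) = 1 / 8 by norm_num] at h
  exact ⟨τ₀, L₀, hτ₀, hL₀, fun V _ G τ t A hτ hττ₀ _ hG hA hcard hWG ht _ hdeg =>
    h V _ G τ t A hτ hττ₀ hG hA hcard hWG ht hdeg⟩
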